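/- The class of finite solvable SST-groups is closed under taking subgroups and epimorphic images: if G is a finite solvable SST-group, then every subgroup of G is a solvable SST-group, and for every normal subgroup N of G the quotient G/N is a solvable SST-group. -/

import Mathlib

open scoped Pointwise

section Defs

variable {G : Type*} [Group G]

/-- `K` is an SS-permutable supplement of `H` in `G`: `HK = G` and `H` permutes with
every Sylow subgroup of `K`. -/
def IsSSSupplement (H K : Subgroup G) : Prop :=
  (H : Set G) * (K : Set G) = Set.univ ∧
    ∀ (p : ℕ) [Fact p.Prime] (P : Sylow p K),
      (H : Set G) * ((P.toSubgroup.map K.subtype : Subgroup G) : Set G) =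
        ((P.toSubgroup.map K.subtype : Subgroup G) : Set G) * (H : Set G)

/-- `H` is SS-permutable in `G`: `H` has a supplement `K` such that `H` permutes with
every Sylow subgroup of `K`. -/
def IsSSPermutable (H : Subgroup G) : Prop :=
  ∃ K : Subgroup G, IsSSSupplement H K

/-- `H` is NSS-permutable in `G`: `H` has a normal supplement `K` such that `H` permutes
with every Sylow subgroup of `K`. -/
def IsNSSPermutable (H : Subgroup G) : Prop :=
  ∃ K : Subgroup G, K.Normal ∧ IsSSSupplement H K

/-- `H` is S-permutable in `G`: it permutes with every Sylow subgroup of `G`. -/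
def IsSPermutable (H : Subgroup G) : Prop :=
  ∀ (p : ℕ) [Fact p.Prime] (P : Sylow p G),
    (H : Set G) * ((P : Subgroup G) : Set G) = ((P : Subgroup G) : Set G) * (H : Set G)

/-- `H` is semipermutable in `G`: `HX = XH` for every subgroup `X` with `gcd(|H|,|X|) = 1`. -/
def IsSemipermutable (H : Subgroup G) : Prop :=
  ∀ X : Subgroup G, Nat.Coprime (Nat.card H) (Nat.card X) →
    (H : Set G) * (X : Set G) = (X : Set G) * (H : Set G)

/-- `H` is S-semipermutable in `G`: `HQ = QH` for every Sylow `q`-subgroup `Q` of `G`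
with `q` a prime not dividing `|H|`. -/
def IsSSemipermutable (H : Subgroup G) : Prop :=
  ∀ (q : ℕ) [Fact q.Prime], ¬ q ∣ Nat.card H → ∀ Q : Sylow q G,
    (H : Set G) * ((Q : Subgroup G) : Set G) = ((Q : Subgroup G) : Set G) * (H : Set G)

end Defs

/-- `G` is an SST-group: SS-permutability is a transitive relation. -/
def IsSSTGroup (G : Type*) [Group G] : Prop :=
  ∀ H K : Subgroup G, H ≤ K → IsSSPermutable (H.subgroupOf K) → IsSSPermutable K →
    IsSSPermutable H

/-- `G` is an NSST-group: NSS-permutability is a transitive relation. -/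
def IsNSSTGroup (G : Type*) [Group G] : Prop :=
  ∀ H K : Subgroup G, H ≤ K → IsNSSPermutable (H.subgroupOf K) → IsNSSPermutable K →
    IsNSSPermutable H

/-- `G` is a PST-group: S-permutability is a transitive relation. -/
def IsPSTGroup (G : Type*) [Group G] : Prop :=
  ∀ H K : Subgroup G, H ≤ K → IsSPermutable (H.subgroupOf K) → IsSPermutable K →
    IsSPermutable H

/-- `G` is a BT-group: semipermutability is a transitive relation. -/
def IsBTGroup (G : Type*) [Group G] : Prop :=
  ∀ H K : Subgroup G, H ≤ K → IsSemipermutable (H.subgroupOf K) → IsSemipermutable K →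
    IsSemipermutable H

/-!
A finite solvable group is an SST-group if and only if all of its subgroups are SS-permutable, and
this second property passes to subgroups and quotients. For the forward direction, let `H` be a
proper subgroup and let `D` be the last term of the derived series not contained in `H`. By Sylow's
theorem the `H`-conjugates of a Sylow subgroup of `D` are already `D`-conjugates, so they agree with
it modulo `⁅D, D⁆ ≤ H`, and hence `H` permutes with every Sylow subgroup of `D`. Some Sylow
`p`-subgroup `R` of `D` is not contained in `H`, and the `p`-group `R` witnesses that `H` is
SS-permutable in the strictly larger subgroup `HR`. Transitivity then climbs from `H` to `G`.
-/

section Permuting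

open scoped commutatorElement

variable {G G' : Type*} [Group G] [Group G'] {H K : Subgroup G}

theorem commute_coe_of_mul_subset
    (h : (H : Set G) * (K : Set G) ⊆ (K : Set G) * (H : Set G)) : Commute (H : Set G) K := by
  refine h.antisymm ?_
  simpa only [mul_inv_rev, inv_coe_set] using Set.inv_subset_inv.mpr h

theorem commute_coe_of_mul_eq_univ (h : (H : Set G) * (K : Set G) = Set.univ) :
    Commute (H : Set G) K :=
  (commute_coe_of_mul_subset (h ▸ Set.subset_univ _)).symm

theorem commute_coe_iff_inv_mul_eq :
    Commute (H : Set G) K ↔ ((H : Set G) * K)⁻¹ = (H : Set G) * K := by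
  rw [mul_inv_rev, inv_coe_set, inv_coe_set, eq_comm, Commute, SemiconjBy]

theorem coe_sup_of_commute (h : Commute (H : Set G) K) :
    ((H ⊔ K : Subgroup G) : Set G) = H * K := by
  let HK : Subgroup G :=
    { carrier := (H : Set G) * K
      one_mem' := ⟨1, H.one_mem, 1, K.one_mem, mul_one 1⟩
      mul_mem' := fun ha hb => by
        simpa only [h.symm.mul_mul_mul_comm, coe_mul_coe] using Set.mul_mem_mul ha hb
      inv_mem' := fun ha => by
        rwa [← Set.mem_inv, commute_coe_iff_inv_mul_eq.mp h] }
  have hH : H ≤ HK := fun x hx => ⟨x, hx, 1, K.one_mem, mul_one x⟩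
  have hK : K ≤ HK := fun x hx => ⟨1, H.one_mem, x, hx, one_mul x⟩
  exact Set.Subset.antisymm (show H ⊔ K ≤ HK from sup_le hH hK)
    (Set.mul_subset_iff.mpr fun _ hx _ hy => Subgroup.mul_mem_sup hx hy)

theorem commute_coe_map (f : G →* G') (h : Commute (H : Set G) K) :
    Commute (H.map f : Set G') (K.map f) := by
  simpa only [Commute, SemiconjBy, Subgroup.coe_map, Set.image_mul] using
    congrArg (f '' ·) h.eq

theorem coe_comap_mul_coe_comap {f : G' →* G} (hH : H ≤ f.range) :
    (H.comap f : Set G') * (K.comap f) = f ⁻¹' (H * K) := by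
  refine (Set.preimage_mul_preimage_subset f).antisymm ?_
  rintro x ⟨h, hh, k, hk, hx⟩
  obtain ⟨a, rfl⟩ := hH hh
  have hak : f (a⁻¹ * x) = k := by rw [map_mul, map_inv, ← hx, inv_mul_cancel_left]
  exact ⟨a, hh, a⁻¹ * x, Set.mem_preimage.mpr (hak ▸ hk), mul_inv_cancel_left a x⟩

theorem commute_coe_comap {f : G' →* G} (hH : H ≤ f.range) (h : Commute (H : Set G) K) :
    Commute (H.comap f : Set G') (K.comap f) := by
  rw [commute_coe_iff_inv_mul_eq, coe_comap_mul_coe_comap hH]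
  ext x
  rw [Set.mem_inv, Set.mem_preimage, map_inv, ← Set.mem_inv, commute_coe_iff_inv_mul_eq.mp h,
    Set.mem_preimage]

theorem map_subtype_comap_subgroupComap (f : G' →* G) (P : Subgroup K) :
    (P.comap (f.subgroupComap K)).map (K.comap f).subtype = (P.map K.subtype).comap f := by
  ext x
  constructor
  · rintro ⟨y, hy, rfl⟩
    exact ⟨f.subgroupComap K y, hy, rfl⟩
  · rintro ⟨k, hk, hkx⟩
    have hxK : x ∈ K.comap f := Subgroup.mem_comap.mpr (hkx ▸ k.2)
    have hfx : f.subgroupComap K ⟨x, hxK⟩ = k := Subtype.ext hkx.symm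
    exact ⟨⟨x, hxK⟩, Subgroup.mem_comap.mpr (hfx ▸ hk), rfl⟩

theorem commute_coe_map_sylow_of_commutator_le {D : Subgroup G} [D.Normal] (hD : ⁅D, D⁆ ≤ H)
    {p : ℕ} [Fact p.Prime] [Finite (Sylow p D)] (P : Sylow p D) :
    Commute (H : Set G) (P.toSubgroup.map D.subtype) := by
  apply commute_coe_of_mul_subset
  rintro _ ⟨h, hh, _, ⟨x, hx, rfl⟩, rfl⟩
  obtain ⟨d, hd⟩ := MulAction.exists_smul_eq D P ((MulAut.conjNormal h : MulAut D) • P)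
  obtain ⟨y, hy, hyx⟩ : (MulAut.conjNormal h : MulAut D) • x ∈ (d • P).toSubgroup :=
    hd ▸ Subgroup.smul_mem_pointwise_smul x _ _ hx
  have hconj : (d : G) * y * (d : G)⁻¹ = h * x * h⁻¹ := congrArg Subtype.val hyx
  have hcomm : ⁅(y : G)⁻¹, (d : G)⁆ ∈ H :=
    hD (Subgroup.commutator_mem_commutator (D.inv_mem y.2) d.2)
  refine ⟨y, ⟨y, hy, rfl⟩, ⁅(y : G)⁻¹, (d : G)⁆ * h, H.mul_mem hcomm hh, ?_⟩
  calc (y : G) * (⁅(y : G)⁻¹, (d : G)⁆ * h)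
      = d * y * (d : G)⁻¹ * h := by rw [commutatorElement_def]; group
    _ = h * x := by rw [hconj, inv_mul_cancel_right]

theorem exists_sylow_not_le_of_ne_top [Finite G] (hH : H ≠ ⊤) :
    ∃ (p : ℕ) (_ : Fact p.Prime) (P : Sylow p G), ¬ P.toSubgroup ≤ H := by
  have : Fact H.index.minFac.Prime := ⟨Nat.minFac_prime (mt Subgroup.index_eq_one.mp hH)⟩
  let P : Sylow H.index.minFac G := default
  exact ⟨_, this, P, fun hle =>
    P.not_dvd_index ((Nat.minFac_dvd _).trans (Subgroup.index_dvd_of_le hle))⟩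

theorem exists_normal_commutator_le_not_le [Group.IsSolvable G] (hH : H ≠ ⊤) :
    ∃ D : Subgroup G, D.Normal ∧ ⁅D, D⁆ ≤ H ∧ ¬ D ≤ H := by
  by_contra! hall
  have eq_top_of_le (n : ℕ) (hn : derivedSeries G n ≤ H) : H = ⊤ := by
    induction n with
    | zero => exact top_le_iff.mp hn
    | succ n ih => exact ih (hall _ (derivedSeries_normal G n) hn)
  obtain ⟨n, hn⟩ := (Group.isSolvable_def G).mp inferInstance
  exact hH (eq_top_of_le n (hn ▸ bot_le))

theorem exists_isPGroup_commute_not_le [Finite G] [Group.IsSolvable G] (hH : H ≠ ⊤) :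
    ∃ (p : ℕ) (_ : Fact p.Prime) (R : Subgroup G),
      IsPGroup p R ∧ Commute (H : Set G) R ∧ ¬ R ≤ H := by
  obtain ⟨D, _, hcomm, hDH⟩ := exists_normal_commutator_le_not_le hH
  obtain ⟨p, hp, P, hPH⟩ :=
    exists_sylow_not_le_of_ne_top (mt Subgroup.subgroupOf_eq_top.mp hDH)
  exact ⟨p, hp, P.toSubgroup.map D.subtype, P.isPGroup'.map _,
    commute_coe_map_sylow_of_commutator_le hcomm P, mt Subgroup.map_le_iff_le_comap.mp hPH⟩

end Permuting

section SSPermutable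

variable {G G' : Type*} [Group G] [Group G'] {H K : Subgroup G}

theorem isSSSupplement_of_isPGroup {p : ℕ} [Fact p.Prime] (hK : IsPGroup p K)
    (hHK : (H : Set G) * (K : Set G) = Set.univ) : IsSSSupplement H K := by
  refine ⟨hHK, fun q _ Q => ?_⟩
  rcases eq_or_ne q p with rfl | hqp
  · have hQ : Q.toSubgroup = ⊤ := (Q.is_maximal' (hK.to_subgroup ⊤) le_top).symm
    rw [hQ, ← MonoidHom.range_eq_map, Subgroup.range_subtype]
    exact commute_coe_of_mul_eq_univ hHK
  · have hQ : Q.toSubgroup = ⊥ :=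
      disjoint_top.mp (IsPGroup.disjoint_of_ne q p hqp _ _ Q.isPGroup' (hK.to_subgroup ⊤))
    rw [hQ, Subgroup.map_bot]
    simp only [Subgroup.coe_bot, Set.mul_singleton, Set.singleton_mul, mul_one, one_mul]

theorem isSSPermutable_top : IsSSPermutable (⊤ : Subgroup G) :=
  ⟨⊤, Set.univ_mul_univ, fun _ _ P =>
    commute_coe_of_mul_eq_univ (Set.univ_mul (OneMemClass.coe_nonempty (P.toSubgroup.map _)))⟩

theorem isSSPermutable_subgroupOf_sup_of_isPGroup {p : ℕ} [Fact p.Prime] (hK : IsPGroup p K)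
    (hHK : Commute (H : Set G) K) : IsSSPermutable (H.subgroupOf (H ⊔ K)) := by
  have hK' : IsPGroup p (K.subgroupOf (H ⊔ K)) :=
    hK.comap_of_injective _ (Subgroup.subtype_injective _)
  refine ⟨K.subgroupOf (H ⊔ K), isSSSupplement_of_isPGroup hK' ?_⟩
  have hrange : H ≤ (H ⊔ K).subtype.range := by
    rw [Subgroup.range_subtype]
    exact le_sup_left
  rw [Subgroup.subgroupOf, Subgroup.subgroupOf, coe_comap_mul_coe_comap hrange,
    ← coe_sup_of_commute hHK, Subgroup.coe_subtype, Subtype.coe_preimage_self]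

theorem IsSSPermutable.comap {f : G' →* G} (hf : Function.Injective f) (hHf : H ≤ f.range)
    (hH : IsSSPermutable H) : IsSSPermutable (H.comap f) := by
  obtain ⟨K, hHK, hperm⟩ := hH
  refine ⟨K.comap f, by rw [coe_comap_mul_coe_comap hHf, hHK, Set.preimage_univ], fun p _ Q => ?_⟩
  have hf' : Function.Injective (f.subgroupComap K) := fun a b hab =>
    Subtype.ext (hf (congrArg Subtype.val hab))
  obtain ⟨P, hP⟩ := Q.exists_comap_eq_of_injective hf'
  rw [← hP, map_subtype_comap_subgroupComap]
  exact commute_coe_comap hHf (hperm p P)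

theorem IsSSPermutable.map [Finite G] {f : G →* G'} (hf : Function.Surjective f)
    (hH : IsSSPermutable H) : IsSSPermutable (H.map f) := by
  obtain ⟨K, hHK, hperm⟩ := hH
  refine ⟨K.map f, ?_, fun p _ Q => ?_⟩
  · rw [Subgroup.coe_map, Subgroup.coe_map, ← Set.image_mul, hHK, Set.image_univ, hf.range_eq]
  · obtain ⟨P, rfl⟩ := Sylow.mapSurjective_surjective (f.subgroupMap_surjective K) p Q
    have hPQ : (P.mapSurjective (f.subgroupMap_surjective K)).toSubgroup.map (K.map f).subtype =
        (P.toSubgroup.map K.subtype).map f := by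
      rw [Sylow.coe_mapSurjective, Subgroup.map_map, Subgroup.map_map]
      rfl
    exact hPQ ▸ commute_coe_map f (hperm p P)

theorem exists_lt_isSSPermutable_subgroupOf [Finite G] [Group.IsSolvable G] (hH : H ≠ ⊤) :
    ∃ M : Subgroup G, H < M ∧ IsSSPermutable (H.subgroupOf M) := by
  obtain ⟨p, _, R, hR, hHR, hRH⟩ := exists_isPGroup_commute_not_le hH
  exact ⟨H ⊔ R, left_lt_sup.mpr hRH, isSSPermutable_subgroupOf_sup_of_isPGroup hR hHR⟩

theorem isSSTGroup_iff_forall_isSSPermutable [Finite G] [Group.IsSolvable G] :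
    IsSSTGroup G ↔ ∀ H : Subgroup G, IsSSPermutable H := by
  refine ⟨fun hG H => ?_, fun hall H _ _ _ _ => hall H⟩
  induction H using WellFoundedGT.induction with
  | ind H ih =>
    rcases eq_or_ne H ⊤ with rfl | hH
    · exact isSSPermutable_top
    · obtain ⟨M, hHM, hM⟩ := exists_lt_isSSPermutable_subgroupOf hH
      exact hG H M hHM.le hM (ih M hHM)

end SSPermutable

/-- Corollary 1.6: the class of finite solvable SST-groups is closed under taking
subgroups and epimorphic images. -/
theorem solvable_sst_group_closed_subgroups_quotients {G : Type*} [Group G] [Finite G]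
    (hsol : IsSolvable G) (hsst : IsSSTGroup G) :
    (∀ H : Subgroup G, IsSolvable H ∧ IsSSTGroup H) ∧
      ∀ (N : Subgroup G) [N.Normal], IsSolvable (G ⧸ N) ∧ IsSSTGroup (G ⧸ N) := by
  have : Group.IsSolvable G := hsol
  rw [isSSTGroup_iff_forall_isSSPermutable] at hsst
  refine ⟨fun L => ⟨inferInstanceAs (Group.IsSolvable L),
      isSSTGroup_iff_forall_isSSPermutable.mpr fun H => ?_⟩,
    fun N _ => ⟨inferInstanceAs (Group.IsSolvable (G ⧸ N)),
      isSSTGroup_iff_forall_isSSPermutable.mpr fun H => ?_⟩⟩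
  · rw [← Subgroup.comap_map_eq_self_of_injective L.subtype_injective H]
    exact (hsst (H.map L.subtype)).comap L.subtype_injective (Subgroup.map_le_range _ _)
  · have hmk := QuotientGroup.mk'_surjective N
    rw [← Subgroup.map_comap_eq_self_of_surjective hmk H]
    exact (hsst (H.comap (QuotientGroup.mk' N))).map hmk
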